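/- Let κ₁, κ₂ be contractions and μ a merger between nested graphs such that the composite μ ∘ κ₂ ∘ κ₁ is defined. Then μ ∘ (κ₂ ∘ κ₁) = (μ ∘ κ₂) ∘ κ₁ as morphisms of the category NGr of nested graphs; that is, the canonical merger–contraction decomposition of μ ∘ (κ₂ ∘ κ₁) coincides with the decomposition obtained by first canonically decomposing μ ∘ κ₂ as κ' ∘ μ' and then canonically decomposing μ' ∘ κ₁ and composing the resulting contractions. -/

import Mathlib

open CategoryTheory

universe v u

/-- A morphism in a category is an identity morphism (up to `eqToHom`). -/
def IsId {C : Type u} [Category.{v} C] {A B : C} (f : A ⟶ B) : Prop :=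
  ∃ h : A = B, f = eqToHom h

/-- A flag in a nested graph is a non-identity morphism. -/
def IsFlag {C : Type u} [Category.{v} C] {A B : C} (f : A ⟶ B) : Prop :=
  ¬ IsId f

/-- An irreducible flag is a flag that cannot be written as the composite of two flags. -/
def IsIrred {C : Type u} [Category.{v} C] {A B : C} (f : A ⟶ B) : Prop :=
  IsFlag f ∧ ¬ ∃ (X : C) (g : A ⟶ X) (h : X ⟶ B), IsFlag g ∧ IsFlag h ∧ g ≫ h = f

/-- A grading: a functor to the finite ordinal `Fin n` (viewed as a preorder category)
sending every non-identity morphism to a non-identity morphism. -/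
def IsGrading {C : Type u} [Category.{v} C] {n : ℕ} (G : C ⥤ Fin n) : Prop :=
  ∀ ⦃A B : C⦄ (f : A ⟶ B), IsFlag f → IsFlag (G.map f)

/-- A nested graph: a category admitting a grading into some finite ordinal. -/
def IsNestedGraph (C : Type u) [Category.{v} C] : Prop :=
  ∃ (n : ℕ) (G : C ⥤ Fin n), IsGrading G

/-- A functor `φ` contracts a flag `f` if `φ.map f` is an identity. -/
def Contracts {C D : Type u} [Category.{v} C] [Category.{v} D]
    (φ : C ⥤ D) {A B : C} (f : A ⟶ B) : Prop :=
  IsId (φ.map f)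

/-- An admissible functor: it maps irreducible flags to identities or irreducible flags,
and whenever it contracts an irreducible flag with domain `A`, it contracts every
irreducible flag with domain `A`. -/
def IsAdmissible {C D : Type u} [Category.{v} C] [Category.{v} D] (φ : C ⥤ D) : Prop :=
  (∀ ⦃A B : C⦄ (f : A ⟶ B), IsIrred f → IsId (φ.map f) ∨ IsIrred (φ.map f)) ∧
  (∀ ⦃A B B' : C⦄ (f : A ⟶ B) (g : A ⟶ B'), IsIrred f → IsIrred g →
      Contracts φ f → Contracts φ g)

/-- The morphisms of the codomain generated by the image of a functor. -/
inductive GenBy {C D : Type u} [Category.{v} C] [Category.{v} D] (φ : C ⥤ D) :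
    ∀ {X Y : D}, (X ⟶ Y) → Prop
  | id (X : D) : GenBy φ (𝟙 X)
  | map {A B : C} (f : A ⟶ B) : GenBy φ (φ.map f)
  | comp {X Y Z : D} (f : X ⟶ Y) (g : Y ⟶ Z) :
      GenBy φ f → GenBy φ g → GenBy φ (f ≫ g)

/-- An epi-functor: its image generates the codomain. -/
def IsEpiFunctor {C D : Type u} [Category.{v} C] [Category.{v} D] (φ : C ⥤ D) : Prop :=
  Function.Surjective φ.obj ∧ ∀ ⦃X Y : D⦄ (f : X ⟶ Y), GenBy φ f

/-- `μ : C ⥤ D` exhibits `D` as the quotient of `C` identifying `r`-related objects,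
with morphisms freely generated by the morphisms of `C` subject to the composition
relations of `C` (expressed via the universal property). -/
def IsQuotientBy {C D : Type u} [Category.{v} C] [Category.{v} D]
    (r : C → C → Prop) (μ : C ⥤ D) : Prop :=
  (∀ A B : C, μ.obj A = μ.obj B ↔ Relation.EqvGen r A B) ∧
  Function.Surjective μ.obj ∧
  (∀ ⦃X Y : D⦄ (f : X ⟶ Y), GenBy μ f) ∧
  (∀ (E : Type u) [Category.{v} E] (F : C ⥤ E),
      (∀ A B : C, r A B → F.obj A = F.obj B) → ∃! F' : D ⥤ E, μ ⋙ F' = F)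

/-- A merger: an admissible epi-functor exhibiting its codomain as the quotient of its
domain by an equivalence relation on objects, with morphisms freely generated subject to
the composition relations of the domain. -/
def IsMerger {C D : Type u} [Category.{v} C] [Category.{v} D] (μ : C ⥤ D) : Prop :=
  IsAdmissible μ ∧ IsEpiFunctor μ ∧
    ∃ r : C → C → Prop, Equivalence r ∧ IsQuotientBy r μ

/-- `A` is a vertex of its fiber under `φ`: it is not the domain of any flag
contracted by `φ`. -/
def IsVertexOver {C D : Type u} [Category.{v} C] [Category.{v} D]
    (φ : C ⥤ D) (A : C) : Prop :=
  ∀ ⦃B : C⦄ (f : A ⟶ B), Contracts φ f → IsId f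

/-- `A₁` is a vertex of the fiber of `φ` over `A₂`. -/
def IsFiberVertex {C D : Type u} [Category.{v} C] [Category.{v} D]
    (φ : C ⥤ D) (A₂ : D) (A₁ : C) : Prop :=
  φ.obj A₁ = A₂ ∧ IsVertexOver φ A₁

/-- A contraction: an admissible epi-functor each of whose fibers is a corolla,
i.e. has a unique vertex. -/
def IsContraction {C D : Type u} [Category.{v} C] [Category.{v} D] (κ : C ⥤ D) : Prop :=
  IsAdmissible κ ∧ IsEpiFunctor κ ∧ ∀ A₂ : D, ∃! A₁ : C, IsFiberVertex κ A₂ A₁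

/-- The canonical merger relation of `φ`: it relates distinct objects `A ≠ B` exactly when
`φ A = φ B` and both `A` and `B` are vertices of the fiber of `φ` over `φ A`. -/
def mergerRel {C D : Type u} [Category.{v} C] [Category.{v} D] (φ : C ⥤ D) :
    C → C → Prop :=
  fun A B => A ≠ B ∧ φ.obj A = φ.obj B ∧ IsVertexOver φ A ∧ IsVertexOver φ B

/-- A canonical merger–contraction decomposition of `φ`: the merger part is the quotient
of the domain identifying, within each fiber of `φ`, all objects that are vertices of that
fiber. -/
def IsCanonicalDecomp {C P D : Type u} [Category.{v} C] [Category.{v} P] [Category.{v} D]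
    (φ : C ⥤ D) (μ : C ⥤ P) (κ : P ⥤ D) : Prop :=
  IsQuotientBy (mergerRel φ) μ ∧ μ ⋙ κ = φ

/-- Two merger–contraction pairs are equal as morphisms of nested graphs: one is obtained
from the other by shifting an isomorphism from the merger to the contraction. -/
def PairEquiv {A B P P' : Type u} [Category.{v} A] [Category.{v} B]
    [Category.{v} P] [Category.{v} P']
    (μ : A ⥤ P) (κ : P ⥤ B) (μ' : A ⥤ P') (κ' : P' ⥤ B) : Prop :=
  ∃ (e : P ⥤ P') (e' : P' ⥤ P), e ⋙ e' = 𝟭 P ∧ e' ⋙ e = 𝟭 P' ∧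
    μ ⋙ e = μ' ∧ e ⋙ κ' = κ

/-- A category contains no cycle of flags. -/
def NoFlagCycles (C : Type u) [Category.{v} C] : Prop :=
  ∀ (k : ℕ), 0 < k → ∀ (obj : Fin (k + 1) → C)
    (flag : ∀ i : Fin k, obj i.castSucc ⟶ obj i.succ),
    (∀ i, IsFlag (flag i)) → obj 0 ≠ obj (Fin.last k)

section

variable {C D E : Type u} [Category.{v} C] [Category.{v} D] [Category.{v} E]

theorem IsId.comp {X Y Z : C} {f : X ⟶ Y} {g : Y ⟶ Z} (hf : IsId f) (hg : IsId g) :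
    IsId (f ≫ g) := by
  obtain ⟨rfl, rfl⟩ := hf
  obtain ⟨rfl, rfl⟩ := hg
  exact ⟨rfl, by simp⟩

theorem IsId.map (φ : C ⥤ D) {X Y : C} {f : X ⟶ Y} (hf : IsId f) : IsId (φ.map f) := by
  obtain ⟨rfl, rfl⟩ := hf
  exact ⟨rfl, by simp⟩

theorem isId_eqToHom {X Y : C} (h : X = Y) : IsId (eqToHom h) := ⟨h, rfl⟩

theorem IsGrading.lt {n : ℕ} {G : C ⥤ Fin n} (hG : IsGrading G) {X Y : C} {f : X ⟶ Y}
    (hf : IsFlag f) : G.obj X < G.obj Y :=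
  lt_of_le_of_ne (leOfHom (G.map f)) fun h => hG f hf ⟨h, Subsingleton.elim _ _⟩

/-- In a nested graph, the factors of an identity are identities. -/
theorem IsNestedGraph.isId_of_comp (hC : IsNestedGraph C) {X Y Z : C} {f : X ⟶ Y} {g : Y ⟶ Z}
    (h : IsId (f ≫ g)) : IsId f ∧ IsId g := by
  obtain ⟨n, G, hG⟩ := hC
  obtain ⟨rfl, -⟩ := h
  constructor
  · by_contra hf
    exact (hG.lt hf).not_ge (leOfHom (G.map g))
  · by_contra hg
    exact (hG.lt hg).not_ge (leOfHom (G.map f))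

/-- Every flag of a nested graph starts with an irreducible flag. -/
theorem IsNestedGraph.exists_irred_comp (hC : IsNestedGraph C) {X Y : C} (f : X ⟶ Y)
    (hf : IsFlag f) : ∃ (Z : C) (p : X ⟶ Z) (q : Z ⟶ Y), IsIrred p ∧ p ≫ q = f := by
  obtain ⟨n, G, hG⟩ := hC
  induction hk : G.obj Y using WellFoundedLT.induction generalizing Y with
  | ind k ih =>
    by_cases hi : IsIrred f
    · exact ⟨Y, f, 𝟙 Y, hi, Category.comp_id f⟩
    · obtain ⟨W, g, h, hg, hh, rfl⟩ : ∃ (W : C) (g : X ⟶ W) (h : W ⟶ Y),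
          IsFlag g ∧ IsFlag h ∧ g ≫ h = f := by
        by_contra hne
        exact hi ⟨hf, hne⟩
      obtain ⟨Z, p, q, hp, rfl⟩ := ih (G.obj W) (hk ▸ hG.lt hh) g hg rfl
      exact ⟨Z, p, q ≫ h, hp, (Category.assoc _ _ _).symm⟩

/-- A flag generated by the image of `φ` starts with a flag in the image of `φ`. -/
theorem GenBy.exists_map_comp {φ : C ⥤ D} {X Y : D} {f : X ⟶ Y} (h : GenBy φ f)
    (hf : IsFlag f) : ∃ (A B : C) (g : A ⟶ B) (hA : X = φ.obj A) (r : φ.obj B ⟶ Y),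
      IsFlag (φ.map g) ∧ f = eqToHom hA ≫ φ.map g ≫ r := by
  induction h with
  | id X => exact absurd (isId_eqToHom rfl) hf
  | map f => exact ⟨_, _, f, rfl, 𝟙 _, hf, by simp⟩
  | @comp X Y Z f g _ _ ihf ihg =>
    by_cases hf' : IsFlag f
    · obtain ⟨A, B, g', hA, r, hg', rfl⟩ := ihf hf'
      exact ⟨A, B, g', hA, r ≫ g, hg', by simp⟩
    · obtain ⟨rfl, rfl⟩ := not_not.mp hf'
      obtain ⟨A, B, g', hA, r, hg', rfl⟩ := ihg fun h => hf ((isId_eqToHom rfl).comp h)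
      exact ⟨A, B, g', hA, r, hg', by simp⟩

/-- An uncontracted flag of a contraction lifts to the vertex of the fiber of its domain. -/
theorem IsContraction.exists_map_eq_of_vertex {κ : C ⥤ D} (hκ : IsContraction κ)
    (hC : IsNestedGraph C) (hD : IsNestedGraph D) {A A' B : C} (hA : IsVertexOver κ A) (g : A' ⟶ B)
    (hg : IsFlag (κ.map g)) (h : κ.obj A' = κ.obj A) :
    ∃ g' : A ⟶ B, κ.map g = eqToHom h ≫ κ.map g' := by
  obtain ⟨n, G, hG⟩ := id hC
  induction hk : G.obj A' using WellFoundedGT.induction generalizing A' with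
  | ind k ih =>
    by_cases hA' : IsVertexOver κ A'
    · obtain rfl := (hκ.2.2 (κ.obj A)).unique ⟨h, hA'⟩ ⟨rfl, hA⟩
      exact ⟨g, by simp⟩
    · obtain ⟨Z, c, hc, hcf⟩ : ∃ (Z : C) (c : A' ⟶ Z), Contracts κ c ∧ IsFlag c := by
        simpa [IsVertexOver, IsFlag] using hA'
      obtain ⟨Y, p, q, hp, rfl⟩ := hC.exists_irred_comp g fun hi => hg (hi.map κ)
      obtain ⟨W, s, t, hs, rfl⟩ := hC.exists_irred_comp c hcf
      have hsc : Contracts κ s := by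
        rw [Contracts, Functor.map_comp] at hc
        exact (hD.isId_of_comp hc).1
      obtain ⟨hY, hpY⟩ : Contracts κ p := hκ.1.2 s p hs hp hsc
      obtain ⟨q', hq'⟩ := ih (G.obj Y) (hk ▸ hG.lt hp.1) q
        (fun hi => hg (by rw [Functor.map_comp]; exact IsId.comp ⟨hY, hpY⟩ hi))
        (hY.symm.trans h) rfl
      exact ⟨q', by rw [Functor.map_comp, hpY, hq', eqToHom_trans_assoc]⟩

/-- A vertex of a fiber of `κ ⋙ ψ` is sent by a contraction `κ` to a vertex of a fiber of `ψ`. -/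
theorem IsContraction.isVertexOver_obj {κ : C ⥤ D} (hκ : IsContraction κ)
    (hC : IsNestedGraph C) (hD : IsNestedGraph D) (hE : IsNestedGraph E) {ψ : D ⥤ E} {A : C}
    (hA : IsVertexOver (κ ⋙ ψ) A) : IsVertexOver ψ (κ.obj A) := by
  intro X f hf
  by_contra hflag
  obtain ⟨A', B, g, h, r, hg, rfl⟩ := (hκ.2.1.2 f).exists_map_comp hflag
  have hA' : IsVertexOver κ A := fun _ k hk => hA k (IsId.map ψ hk)
  obtain ⟨g', hg'⟩ := hκ.exists_map_eq_of_vertex hC hD hA' g hg h.symm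
  have hc : Contracts (κ ⋙ ψ) g' := by
    simp only [Contracts, hg', Category.assoc, eqToHom_trans_assoc, eqToHom_refl,
      Category.id_comp, Functor.map_comp] at hf
    exact (hE.isId_of_comp hf).1
  exact hg (hg' ▸ (isId_eqToHom _).comp (IsId.map κ (hA g' hc)))

theorem mergerRel_of_eqvGen {φ : C ⥤ D} {A B : C} (h : Relation.EqvGen (mergerRel φ) A B)
    (hne : A ≠ B) : mergerRel φ A B := by
  have key : A = B ∨ mergerRel φ A B := by
    clear hne
    induction h with
    | rel _ _ h => exact Or.inr h
    | refl _ => exact Or.inl rfl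
    | symm _ _ _ ih =>
      rcases ih with rfl | ⟨h₁, h₂, h₃, h₄⟩
      · exact Or.inl rfl
      · exact Or.inr ⟨h₁.symm, h₂.symm, h₄, h₃⟩
    | trans x y z _ _ ih₁ ih₂ =>
      rcases ih₁ with rfl | ⟨_, h₂, h₃, _⟩
      · exact ih₂
      · rcases ih₂ with rfl | ⟨_, k₂, _, k₄⟩
        · exact Or.inr ⟨‹_›, h₂, h₃, ‹_›⟩
        · exact (eq_or_ne x z).imp_right fun hxz => ⟨hxz, h₂.trans k₂, h₃, k₄⟩
  exact key.resolve_left hne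

/-- The canonical relation of `κ ⋙ ψ` is that of `κ ⋙ μ`, where `μ` is the canonical
quotient for `ψ`. -/
theorem IsContraction.mergerRel_comp_eq {P : Type u} [Category.{v} P] {κ : C ⥤ D}
    (hκ : IsContraction κ) (hC : IsNestedGraph C) (hD : IsNestedGraph D)
    (hE : IsNestedGraph E) {ψ : D ⥤ E} {μ : D ⥤ P} {κ' : P ⥤ E} (hd : IsCanonicalDecomp ψ μ κ') :
    mergerRel (κ ⋙ ψ) = mergerRel (κ ⋙ μ) := by
  obtain ⟨hμ, rfl⟩ := hd
  ext A B
  constructor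
  · rintro ⟨hne, hobj, hA, hB⟩
    refine ⟨hne, ?_, fun _ f hf => hA f (IsId.map κ' hf), fun _ f hf => hB f (IsId.map κ' hf)⟩
    by_cases hAB : κ.obj A = κ.obj B
    · exact congrArg μ.obj hAB
    · exact (hμ.1 _ _).2 (.rel _ _ ⟨hAB, hobj, hκ.isVertexOver_obj hC hD hE hA,
        hκ.isVertexOver_obj hC hD hE hB⟩)
  · rintro ⟨hne, hobj, hA, hB⟩
    have hA' : IsVertexOver κ A := fun _ f hf => hA f (IsId.map μ hf)
    have hB' : IsVertexOver κ B := fun _ f hf => hB f (IsId.map μ hf)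
    have hAB : κ.obj A ≠ κ.obj B := fun h =>
      hne ((hκ.2.2 (κ.obj B)).unique ⟨h, hA'⟩ ⟨rfl, hB'⟩)
    obtain ⟨-, hobj', hvA, hvB⟩ := mergerRel_of_eqvGen ((hμ.1 _ _).1 hobj) hAB
    exact ⟨hne, hobj', fun _ f hf => hA' f (hvA _ hf), fun _ f hf => hB' f (hvB _ hf)⟩

theorem IsQuotientBy.obj_eq {r : C → C → Prop} {μ : C ⥤ D} (h : IsQuotientBy r μ) (A B : C)
    (hr : r A B) : μ.obj A = μ.obj B :=
  (h.1 A B).2 (.rel _ _ hr)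

theorem IsQuotientBy.functor_ext {r : C → C → Prop} {μ : C ⥤ D} (h : IsQuotientBy r μ)
    {F F' : D ⥤ E} (hF : μ ⋙ F = μ ⋙ F') : F = F' :=
  (h.2.2.2 E (μ ⋙ F') fun A B hr => congrArg F'.obj (h.obj_eq A B hr)).unique hF rfl

/-- Two factorizations of a functor through quotients by the same relation agree. -/
theorem IsQuotientBy.pairEquiv {P P' : Type u} [Category.{v} P] [Category.{v} P']
    {r : C → C → Prop} {μ : C ⥤ P} {μ' : C ⥤ P'} (h : IsQuotientBy r μ)
    (h' : IsQuotientBy r μ') {κ : P ⥤ D} {κ' : P' ⥤ D} (hc : μ ⋙ κ = μ' ⋙ κ') :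
    PairEquiv μ κ μ' κ' := by
  obtain ⟨e, he, -⟩ := h.2.2.2 P' μ' h'.obj_eq
  obtain ⟨e', he', -⟩ := h'.2.2.2 P μ h.obj_eq
  refine ⟨e, e', h.functor_ext ?_, h'.functor_ext ?_, he, h.functor_ext ?_⟩
  · rw [← Functor.assoc, he, he', Functor.comp_id]
  · rw [← Functor.assoc, he', he, Functor.comp_id]
  · rw [← Functor.assoc, he, hc]

end

/-- for contractions `κ₁, κ₂` and a merger `μ`, one has
`μ ∘ (κ₂ ∘ κ₁) = (μ ∘ κ₂) ∘ κ₁` in `NGr`: the canonical merger–contraction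
decomposition `(ρ, σ)` of `μ ∘ (κ₂ ∘ κ₁)` coincides (up to shifting an isomorphism) with
the pair obtained by first canonically decomposing `μ ∘ κ₂` as `κ' ∘ μ'`, then
canonically decomposing `μ' ∘ κ₁` as `lam ∘ ν` and composing the resulting contractions,
namely with the pair `(ν, lam ⋙ κ')`. -/
theorem contraction_contraction_merger_assoc {N₁ N₂ N₃ N₄ P Q R : Type u}
    [Category.{v} N₁] [Category.{v} N₂] [Category.{v} N₃] [Category.{v} N₄]
    [Category.{v} P] [Category.{v} Q] [Category.{v} R]
    (h₁ : IsNestedGraph N₁) (h₂ : IsNestedGraph N₂) (h₃ : IsNestedGraph N₃)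
    (h₄ : IsNestedGraph N₄) (hP : IsNestedGraph P) (hQ : IsNestedGraph Q)
    (hR : IsNestedGraph R)
    (κ₁ : N₁ ⥤ N₂) (κ₂ : N₂ ⥤ N₃) (μ : N₃ ⥤ N₄)
    (hκ₁ : IsContraction κ₁) (hκ₂ : IsContraction κ₂) (hμ : IsMerger μ)
    (μ' : N₂ ⥤ P) (κ' : P ⥤ N₄) (hd₁ : IsCanonicalDecomp (κ₂ ⋙ μ) μ' κ')
    (ν : N₁ ⥤ Q) (lam : Q ⥤ P) (hd₂ : IsCanonicalDecomp (κ₁ ⋙ μ') ν lam)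
    (ρ : N₁ ⥤ R) (σ : R ⥤ N₄) (hd₃ : IsCanonicalDecomp ((κ₁ ⋙ κ₂) ⋙ μ) ρ σ) :
    PairEquiv ρ σ ν (lam ⋙ κ') := by
  have hrel := hκ₁.mergerRel_comp_eq h₁ h₂ h₄ hd₁
  refine hd₃.1.pairEquiv (hrel ▸ hd₂.1 :) ?_
  rw [hd₃.2, ← Functor.assoc, hd₂.2, Functor.assoc, Functor.assoc, hd₁.2]
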